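/- Let H be a finite abelian group, let 1 < n_1 ≤ … ≤ n_r be integers such that n_s < |H| · Π_{i=1}^{s−1} n_i for each s ∈ [1, r], let G = H ⊕ C_{n_1} ⊕ … ⊕ C_{n_r}, and let k ∈ ℕ with k ≥ 1. Then SD_k(G) ≥ SD_{k+r}(H) + Σ_{i=1}^{r} (n_i − 1). -/

import Mathlib

open Multiset

/-- A sequence (finite multiset) over `G` is zero-sumfree if every nonempty
subsequence has nonzero sum. -/
def IsZeroSumfree {G : Type*} [AddCommMonoid G] (S : Multiset G) : Prop :=
  ∀ T ≤ S, T ≠ 0 → T.sum ≠ 0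

/-- A minimal zero-sum sequence: a nonempty sequence with sum zero all of whose
nonempty proper subsequences have nonzero sum. -/
def IsMinimalZeroSum {G : Type*} [AddCommMonoid G] (S : Multiset G) : Prop :=
  S ≠ 0 ∧ S.sum = 0 ∧ ∀ T ≤ S, T ≠ 0 → T ≠ S → T.sum ≠ 0

/-- The cumulated multiplicity of level `ℓ` of a sequence:
`cm_ℓ(S) = Σ_{g ∈ G} max {0, v_g(S) − ℓ}`. -/
noncomputable def cmul {G : Type*} [AddCommMonoid G] (ℓ : ℕ) (S : Multiset G) : ℕ :=
  letI := Classical.decEq G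
  ∑ g ∈ S.toFinset, (S.count g - ℓ)

/-- `SD_{(k,ℓ)}(G)`: the maximum length of a minimal zero-sum sequence `S` over `G`
with `cm_ℓ(S) ≤ k`. -/
noncomputable def SDpair (G : Type*) [AddCommMonoid G] (k ℓ : ℕ) : ℕ :=
  sSup {m | ∃ S : Multiset G, IsMinimalZeroSum S ∧ cmul ℓ S ≤ k ∧ Multiset.card S = m}

/-- `SD_k(G)`: the `k`-th Strong Davenport constant. -/
noncomputable def SDk (G : Type*) [AddCommMonoid G] (k : ℕ) : ℕ := SDpair G k 1

/-- The Strong Davenport constant `SD(G) = SD_0(G)`. -/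
noncomputable def SD (G : Type*) [AddCommMonoid G] : ℕ := SDk G 0

/-- The Olson constant `Ol(G) = SD_1(G)`. -/
noncomputable def Ol (G : Type*) [AddCommMonoid G] : ℕ := SDk G 1

/-- `ol_k(G)`: the maximum length of a zero-sumfree sequence `S` over `G` with
`cm(S) ≤ k`. -/
noncomputable def olk (G : Type*) [AddCommMonoid G] (k : ℕ) : ℕ :=
  sSup {m | ∃ S : Multiset G, IsZeroSumfree S ∧ cmul 1 S ≤ k ∧ Multiset.card S = m}

/-- `Ol_k(G)`: the smallest integer `ℓ` such that every sequence `S` over `G` with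
`cm(S) ≤ k` and `|S| ≥ ℓ` has a nonempty zero-sum subsequence. -/
noncomputable def Olk (G : Type*) [AddCommMonoid G] (k : ℕ) : ℕ :=
  sInf {m | ∀ S : Multiset G, cmul 1 S ≤ k → m ≤ Multiset.card S →
    ∃ T, T ≤ S ∧ T ≠ 0 ∧ T.sum = 0}

/-- The Davenport constant `D(G)`: the maximum length of a minimal zero-sum
sequence over `G`. -/
noncomputable def DavenportD (G : Type*) [AddCommMonoid G] : ℕ :=
  sSup {m | ∃ S : Multiset G, IsMinimalZeroSum S ∧ Multiset.card S = m}

/-!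
One cyclic summand is split off at a time. Take a minimal zero-sum sequence `g T` over `H` of
maximal length among those with `cm ≤ k + 1`, where `g` is a repeated term if there is one, so that
`cm(T) ≤ k`. For an element `e` of order `n` and a set `A ⊆ H` with `|A| = n` and `σ(A) = g`,
replace `g` by the `n` distinct terms `(x, e)`, `x ∈ A`. A zero-sum subsequence of the new sequence
contains none or all of these terms, so minimality is preserved; the length grows by `n - 1`, and
`cm` drops to `cm(T)`. Maximality of the length makes it at least two, because of the sequences
`x (-x)`, so that the chosen `g` is nonzero.

Such a set `A` exists as soon as `g ≠ 0` and `0 < n < |H|`. Indeed, if no `n`-subset sums to `g`,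
then exchanging one element shows that every `n`-subset `A` is invariant under translation by
`g - σ(A)`. Comparing this for `A` and for `A` with one element exchanged forces `2x = 0` on all of
`H`; then every `n`-subset has sum zero, which is absurd.
-/

section Preliminaries

variable {α β : Type*}

theorem exists_le_map_eq_of_le_map {f : α → β} {s : Multiset α} {t : Multiset β}
    (h : t ≤ s.map f) : ∃ u ≤ s, u.map f = t := by
  obtain ⟨v, hv⟩ := Multiset.le_iff_exists_add.1 h
  rw [← Multiset.rel_eq, Multiset.rel_map_left, Multiset.rel_add_right] at hv
  obtain ⟨u, w, hu, -, rfl⟩ := hv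
  exact ⟨u, Multiset.le_add_right u w, Multiset.rel_eq.1 (Multiset.rel_map_left.2 hu)⟩

theorem exists_le_le_add_eq_of_le_add {s t u : Multiset α} (h : s ≤ t + u) :
    ∃ t' ≤ t, ∃ u' ≤ u, t' + u' = s := by
  classical
  exact ⟨s ∩ t, Multiset.inter_le_right, s - t, tsub_le_iff_left.2 h,
    by rw [add_comm, Multiset.sub_add_inter]⟩

theorem card_insert_erase_of_mem_of_notMem [DecidableEq α] {A : Finset α} {a b : α} (ha : a ∈ A)
    (hb : b ∉ A) : (insert b (A.erase a)).card = A.card := by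
  rw [Finset.card_insert_of_notMem (fun h => hb (Finset.mem_of_mem_erase h)),
    Finset.card_erase_add_one ha]

theorem prod_Iio_succ_eq_mul {M : Type*} [CommMonoid M] {r : ℕ} (f : Fin (r + 1) → M)
    (s : Fin r) : ∏ i ∈ Finset.Iio s.succ, f i = f 0 * ∏ i ∈ Finset.Iio s, f i.succ := by
  rw [← Finset.Ico_bot, _root_.bot_eq_zero, ← Finset.Ioo_insert_left s.succ_pos,
    Finset.prod_insert Finset.left_notMem_Ioo, ← Fin.map_succEmb_Iio, Finset.prod_map]
  rfl

end Preliminaries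

section SubsetSums

variable {H : Type*} [AddCommGroup H] {A : Finset H} {a b d g : H}

theorem add_mem_iff_of_forall_add_mem (h : ∀ x ∈ A, x + d ∈ A) : a + d ∈ A ↔ a ∈ A := by
  have hsub : A.map (addRightEmbedding d) ⊆ A := by
    simpa [Finset.subset_iff] using h
  have heq : A.map (addRightEmbedding d) = A :=
    Finset.eq_of_subset_of_card_le hsub (Finset.card_map _).ge
  conv_lhs => rw [← heq]
  exact Finset.mem_map' (addRightEmbedding d)

theorem sum_mem_zmultiples_of_add_mem (h2 : ∀ x : H, x + x = 0) (hd : d ≠ 0)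
    (h : ∀ x ∈ A, x + d ∈ A) : ∑ x ∈ A, x ∈ AddSubgroup.zmultiples d := by
  rw [← QuotientAddGroup.eq_zero_iff, ← QuotientAddGroup.mk'_apply, map_sum]
  -- modulo `d`, the terms `x` and `x + d` cancel
  refine Finset.sum_involution (fun x _ => x + d) (fun x _ => ?_) (fun x _ _ => by simpa using hd)
    h (fun x _ => by rw [add_assoc, h2, add_zero])
  rw [← _root_.map_add, ← add_assoc, h2, zero_add, QuotientAddGroup.mk'_apply,
    QuotientAddGroup.eq_zero_iff]
  exact AddSubgroup.mem_zmultiples d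

theorem eq_zero_or_eq_of_mem_zmultiples (hd : d + d = 0) (ha : a ∈ AddSubgroup.zmultiples d) :
    a = 0 ∨ a = d := by
  obtain ⟨m, rfl⟩ := AddSubgroup.mem_zmultiples_iff.1 ha
  rcases Int.even_or_odd' m with ⟨j, rfl | rfl⟩
  · left
    rw [mul_comm, mul_zsmul, two_zsmul, hd, zsmul_zero]
  · right
    rw [add_zsmul, mul_comm, mul_zsmul, two_zsmul, hd, zsmul_zero, zero_add, one_zsmul]

theorem sum_insert_erase_of_mem_of_notMem [DecidableEq H] (ha : a ∈ A) (hb : b ∉ A) :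
    ∑ x ∈ insert b (A.erase a), x = ∑ x ∈ A, x + b - a := by
  rw [Finset.sum_insert (fun h => hb (Finset.mem_of_mem_erase h)), Finset.sum_erase_eq_sub ha]
  abel

theorem add_sub_sum_mem_iff (hg : ∀ B : Finset H, B.card = A.card → ∑ x ∈ B, x ≠ g) :
    a + (g - ∑ x ∈ A, x) ∈ A ↔ a ∈ A := by
  classical
  refine add_mem_iff_of_forall_add_mem fun x hx => ?_
  by_contra hnot
  refine hg _ (card_insert_erase_of_mem_of_notMem hx hnot) ?_
  rw [sum_insert_erase_of_mem_of_notMem hx hnot]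
  abel

theorem add_self_eq_add_self_add_sub_sum
    (hg : ∀ B : Finset H, B.card = A.card → ∑ x ∈ B, x ≠ g) (ha : a ∈ A) (hb : b ∉ A) :
    b + b = a + a + ((g - ∑ x ∈ A, x) + (g - ∑ x ∈ A, x)) := by
  classical
  set d := g - ∑ x ∈ A, x with hd
  set A' := insert b (A.erase a) with hA'
  set d' := g - ∑ x ∈ A', x with hd'
  have hcard : A'.card = A.card := card_insert_erase_of_mem_of_notMem ha hb
  have hd'_eq : d' = d + a - b := by
    rw [hd', hd, sum_insert_erase_of_mem_of_notMem ha hb]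
    abel
  have hd'_ne : d' ≠ 0 := fun h => hg A' hcard (sub_eq_zero.1 h).symm
  have periodic (x : H) : x + d ∈ A ↔ x ∈ A := add_sub_sum_mem_iff hg
  have periodic' (x : H) : x + d' ∈ A' ↔ x ∈ A' :=
    add_sub_sum_mem_iff fun B hB => hg B (hB.trans hcard)
  have hab : a ≠ b := fun h => hb (h ▸ ha)
  have hmem' : b - d' ∈ A' := by
    rw [← periodic', sub_add_cancel]
    exact Finset.mem_insert_self _ _
  have hmem : b - d' ∈ A :=
    Finset.mem_of_mem_erase (Finset.mem_of_mem_insert_of_ne hmem' (by simpa using hd'_ne))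
  have hmem_sub : b - d' - d ∈ A := by rwa [← periodic, sub_add_cancel]
  have hnotMem' : b - d' - d ∉ A' := by
    have hshift : b - d' - d + d' + d' = a := by
      rw [hd'_eq]
      abel
    rw [← periodic', ← periodic', hshift]
    simp [hA', hab]
  have hexch : b - d' - d = a := by
    by_contra hne
    exact hnotMem' (Finset.mem_insert_of_mem (Finset.mem_erase.2 ⟨hne, hmem_sub⟩))
  calc b + b = b - d' - d + a + (d + d) := by
        rw [hd'_eq]
        abel
    _ = a + a + (d + d) := by rw [hexch]

theorem add_self_eq_add_self_of_mem_of_notMem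
    (hg : ∀ B : Finset H, B.card = A.card → ∑ x ∈ B, x ≠ g) (ha : a ∈ A) (hb : b ∉ A) :
    a + a = b + b := by
  have hb_add : b + (g - ∑ x ∈ A, x) ∉ A := (add_sub_sum_mem_iff hg).not.2 hb
  have h := add_self_eq_add_self_add_sub_sum hg ha hb_add
  rw [add_add_add_comm] at h
  exact (add_right_cancel h).symm

theorem sum_eq_zero_of_forall_sum_ne (h2 : ∀ x : H, x + x = 0) (hg0 : g ≠ 0)
    (hg : ∀ B : Finset H, B.card = A.card → ∑ x ∈ B, x ≠ g) : ∑ x ∈ A, x = 0 := by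
  have hd : g - ∑ x ∈ A, x ≠ 0 := sub_ne_zero.2 (hg A rfl).symm
  have hmem := sum_mem_zmultiples_of_add_mem h2 hd fun x hx => (add_sub_sum_mem_iff hg).2 hx
  refine (eq_zero_or_eq_of_mem_zmultiples (h2 _) hmem).resolve_right fun h => hg0 ?_
  rw [← h2 (∑ x ∈ A, x), ← sub_eq_iff_eq_add, ← h]

theorem exists_finset_card_eq_sum_eq [Fintype H] {n : ℕ} (hg0 : g ≠ 0) (hn0 : 0 < n)
    (hn : n < Fintype.card H) : ∃ A : Finset H, A.card = n ∧ ∑ x ∈ A, x = g := by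
  classical
  by_contra! hg
  obtain ⟨A, -, rfl⟩ := Finset.exists_subset_card_eq (s := (Finset.univ : Finset H)) hn.le
  obtain ⟨a, ha⟩ := Finset.card_pos.1 hn0
  obtain ⟨b, -, hb⟩ := Finset.exists_mem_notMem_of_card_lt_card hn
  have add_self_eq (x : H) : x + x = a + a := by
    by_cases hx : x ∈ A
    · rw [add_self_eq_add_self_of_mem_of_notMem hg hx hb,
        add_self_eq_add_self_of_mem_of_notMem hg ha hb]
    · rw [add_self_eq_add_self_of_mem_of_notMem hg ha hx]
  have add_self (x : H) : x + x = 0 := by rw [add_self_eq x, ← add_self_eq 0, add_zero]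
  have hcard : (insert b (A.erase a)).card = A.card := card_insert_erase_of_mem_of_notMem ha hb
  have hsum : ∑ x ∈ insert b (A.erase a), x = 0 :=
    sum_eq_zero_of_forall_sum_ne add_self hg0 fun B hB => hg B (hB.trans hcard)
  rw [sum_insert_erase_of_mem_of_notMem ha hb, sum_eq_zero_of_forall_sum_ne add_self hg0 hg,
    zero_add, sub_eq_zero] at hsum
  exact hb (hsum ▸ ha)

end SubsetSums

section CumulatedMultiplicity

variable {G G' : Type*} [AddCommMonoid G] [AddCommMonoid G']

theorem cmul_eq_sum [DecidableEq G] (ℓ : ℕ) (S : Multiset G) :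
    cmul ℓ S = ∑ g ∈ S.toFinset, (S.count g - ℓ) := by
  unfold cmul
  congr!

theorem cmul_map {f : G → G'} (hf : Function.Injective f) (ℓ : ℕ) (S : Multiset G) :
    cmul ℓ (S.map f) = cmul ℓ S := by
  classical
  rw [cmul_eq_sum, cmul_eq_sum, Multiset.toFinset_map, Finset.sum_image hf.injOn]
  exact Finset.sum_congr rfl fun x _ => by rw [Multiset.count_map_eq_count' f S hf]

theorem cmul_add_of_disjoint {S T : Multiset G} (h : Disjoint S T) (ℓ : ℕ) :
    cmul ℓ (S + T) = cmul ℓ S + cmul ℓ T := by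
  classical
  rw [cmul_eq_sum, cmul_eq_sum, cmul_eq_sum, Multiset.toFinset_add,
    Finset.sum_union (Multiset.disjoint_toFinset.2 h)]
  congr 1 <;> refine Finset.sum_congr rfl fun x hx => ?_ <;>
    rw [Multiset.mem_toFinset] at hx <;> rw [Multiset.count_add]
  · rw [Multiset.count_eq_zero_of_notMem (Multiset.disjoint_left.1 h hx), add_zero]
  · rw [Multiset.count_eq_zero_of_notMem (Multiset.disjoint_right.1 h hx), zero_add]

theorem card_le_cmul_add_mul_card [Finite G] (ℓ : ℕ) (S : Multiset G) :
    Multiset.card S ≤ cmul ℓ S + ℓ * Nat.card G := by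
  classical
  have := Fintype.ofFinite G
  calc Multiset.card S = ∑ g ∈ S.toFinset, S.count g := (Multiset.toFinset_sum_count_eq S).symm
    _ ≤ ∑ g ∈ S.toFinset, (S.count g - ℓ + ℓ) := Finset.sum_le_sum fun _ _ => by omega
    _ = cmul ℓ S + ℓ * S.toFinset.card := by
      rw [Finset.sum_add_distrib, ← cmul_eq_sum, Finset.sum_const, smul_eq_mul, mul_comm]
    _ ≤ cmul ℓ S + ℓ * Nat.card G := by
      rw [Nat.card_eq_fintype_card]
      gcongr
      exact S.toFinset.card_le_univ

theorem cmul_one_add_card_toFinset [DecidableEq G] (S : Multiset G) :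
    cmul 1 S + S.toFinset.card = Multiset.card S := by
  rw [cmul_eq_sum, ← Multiset.toFinset_sum_count_eq S, Finset.card_eq_sum_ones,
    ← Finset.sum_add_distrib]
  exact Finset.sum_congr rfl fun x hx =>
    Nat.sub_add_cancel (Multiset.one_le_count_iff_mem.2 (Multiset.mem_toFinset.1 hx))

theorem cmul_one_eq_zero_of_nodup {S : Multiset G} (hS : S.Nodup) : cmul 1 S = 0 := by
  classical
  have h := cmul_one_add_card_toFinset S
  rw [Multiset.toFinset_card_of_nodup hS] at h
  omega

theorem cmul_one_cons_of_mem {g : G} {S : Multiset G} (hg : g ∈ S) :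
    cmul 1 (g ::ₘ S) = cmul 1 S + 1 := by
  classical
  have h := cmul_one_add_card_toFinset S
  have h_cons := cmul_one_add_card_toFinset (g ::ₘ S)
  rw [Multiset.toFinset_cons, Finset.insert_eq_of_mem (Multiset.mem_toFinset.2 hg),
    Multiset.card_cons] at h_cons
  omega

theorem exists_eq_cons_cmul_one_le {S : Multiset G} {k : ℕ} (hS : S ≠ 0)
    (hcm : cmul 1 S ≤ k + 1) : ∃ g T, S = g ::ₘ T ∧ cmul 1 T ≤ k := by
  by_cases hnodup : S.Nodup
  · obtain ⟨g, hg⟩ := Multiset.exists_mem_of_ne_zero hS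
    obtain ⟨T, rfl⟩ := Multiset.exists_cons_of_mem hg
    exact ⟨g, T, rfl, by simp [cmul_one_eq_zero_of_nodup (Multiset.nodup_cons.1 hnodup).2]⟩
  · rw [Multiset.nodup_iff_ne_cons_cons] at hnodup
    push Not at hnodup
    obtain ⟨g, T, rfl⟩ := hnodup
    rw [cmul_one_cons_of_mem (Multiset.mem_cons_self g T)] at hcm
    exact ⟨g, g ::ₘ T, rfl, Nat.le_of_succ_le_succ hcm⟩

end CumulatedMultiplicity

namespace IsMinimalZeroSum

theorem map {G G' : Type*} [AddCommMonoid G] [AddCommMonoid G'] {S : Multiset G}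
    (hS : IsMinimalZeroSum S) (f : G →+ G') (hf : Function.Injective f) :
    IsMinimalZeroSum (S.map f) := by
  obtain ⟨hne, hsum, hmin⟩ := hS
  refine ⟨by simpa using hne, by rw [← map_multiset_sum, hsum, _root_.map_zero], ?_⟩
  intro T hT hT0 hTne hTsum
  obtain ⟨U, hU, rfl⟩ := exists_le_map_eq_of_le_map hT
  rw [← map_multiset_sum, map_eq_zero_iff f hf] at hTsum
  exact hmin U hU (by simpa using hT0) (by rintro rfl; exact hTne rfl) hTsum

theorem ne_zero_of_mem {G : Type*} [AddCommMonoid G] {S : Multiset G} {g : G}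
    (hS : IsMinimalZeroSum S) (hcard : 1 < Multiset.card S) (hg : g ∈ S) : g ≠ 0 := by
  rintro rfl
  refine hS.2.2 {0} (Multiset.singleton_le.2 hg) (Multiset.singleton_ne_zero 0) ?_ (by simp)
  rintro rfl
  simp at hcard

theorem pair_neg {G : Type*} [AddCommGroup G] {g : G} (hg : g ≠ 0) :
    IsMinimalZeroSum ({g, -g} : Multiset G) := by
  refine ⟨by simp, by simp, fun T hT hT0 hTne => ?_⟩
  have hlt : Multiset.card T < 2 := by simpa using Multiset.card_lt_card (lt_of_le_of_ne hT hTne)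
  have hpos : 0 < Multiset.card T := Multiset.card_pos.2 hT0
  obtain ⟨x, rfl⟩ := Multiset.card_eq_one.1 (show Multiset.card T = 1 by omega)
  have hx : x = g ∨ x = -g := by simpa using hT
  rcases hx with rfl | rfl <;> simpa using hg

end IsMinimalZeroSum

section StrongDavenport

variable {G G' : Type*} [AddCommMonoid G] [AddCommMonoid G'] {k ℓ : ℕ}

theorem bddAbove_card_isMinimalZeroSum (G : Type*) [AddCommMonoid G] [Finite G] (k ℓ : ℕ) :
    BddAbove {m | ∃ S : Multiset G, IsMinimalZeroSum S ∧ cmul ℓ S ≤ k ∧ Multiset.card S = m} := by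
  refine ⟨k + ℓ * Nat.card G, ?_⟩
  rintro m ⟨S, -, hcm, rfl⟩
  exact (card_le_cmul_add_mul_card ℓ S).trans (Nat.add_le_add_right hcm _)

theorem card_le_SDpair [Finite G] {S : Multiset G} (hS : IsMinimalZeroSum S)
    (hcm : cmul ℓ S ≤ k) : Multiset.card S ≤ SDpair G k ℓ :=
  le_csSup (bddAbove_card_isMinimalZeroSum G k ℓ) ⟨S, hS, hcm, rfl⟩

theorem exists_card_eq_SDpair [Finite G] (h : 0 < SDpair G k ℓ) :
    ∃ S : Multiset G, IsMinimalZeroSum S ∧ cmul ℓ S ≤ k ∧ Multiset.card S = SDpair G k ℓ := by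
  refine Nat.sSup_mem (Set.nonempty_iff_ne_empty.2 fun hempty => ?_)
    (bddAbove_card_isMinimalZeroSum G k ℓ)
  rw [SDpair, hempty, csSup_empty] at h
  exact h.false

theorem SDpair_le_of_injective [Finite G'] (f : G →+ G') (hf : Function.Injective f)
    (k ℓ : ℕ) : SDpair G k ℓ ≤ SDpair G' k ℓ := by
  refine csSup_le_csSup' (bddAbove_card_isMinimalZeroSum G' k ℓ) ?_
  rintro m ⟨S, hS, hcm, rfl⟩
  exact ⟨S.map f, hS.map f hf, by rwa [cmul_map hf], Multiset.card_map f S⟩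

theorem two_le_SDk_succ (G : Type*) [AddCommGroup G] [Finite G] [Nontrivial G] (k : ℕ) :
    2 ≤ SDk G (k + 1) := by
  classical
  obtain ⟨g, hg⟩ := exists_ne (0 : G)
  have hcm : cmul 1 ({g, -g} : Multiset G) ≤ k + 1 := by
    have h := cmul_one_add_card_toFinset ({g, -g} : Multiset G)
    have hpos : 0 < ({g, -g} : Multiset G).toFinset.card := Finset.card_pos.2 ⟨g, by simp⟩
    rw [Multiset.card_pair] at h
    omega
  exact (Multiset.card_pair g (-g)).symm.trans_le
    (card_le_SDpair (IsMinimalZeroSum.pair_neg hg) hcm)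

end StrongDavenport

section SplitOff

variable {H K : Type*}

/-- The sequence over `H ⊕ K` formed by the terms of `T`, with second coordinate `0`, and those of
`A`, with second coordinate `e`. It takes the place of a minimal zero-sum sequence `σ(A) T` over
`H`: the single term `σ(A)` is replaced by the terms of `A`. -/
def splitOff [Zero K] (e : K) (T A : Multiset H) : Multiset (H × K) :=
  T.map (fun x => (x, 0)) + A.map (fun x => (x, e))

theorem card_splitOff [Zero K] (e : K) (T A : Multiset H) :
    Multiset.card (splitOff e T A) = Multiset.card T + Multiset.card A := by
  simp [splitOff]

theorem exists_splitOff_eq_of_le_splitOff [Zero K] {e : K} {T A : Multiset H}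
    {U : Multiset (H × K)} (h : U ≤ splitOff e T A) : ∃ T' ≤ T, ∃ A' ≤ A, U = splitOff e T' A' := by
  obtain ⟨V, hV, W, hW, rfl⟩ := exists_le_le_add_eq_of_le_add h
  obtain ⟨T', hT', rfl⟩ := exists_le_map_eq_of_le_map hV
  obtain ⟨A', hA', rfl⟩ := exists_le_map_eq_of_le_map hW
  exact ⟨T', hT', A', hA', rfl⟩

variable [AddCommMonoid H] [AddCommMonoid K]

theorem sum_splitOff (e : K) (T A : Multiset H) :
    (splitOff e T A).sum = (T.sum + A.sum, Multiset.card A • e) := by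
  have sum_map_prodMk (c : K) (U : Multiset H) :
      (U.map fun x => (x, c)).sum = (U.sum, Multiset.card U • c) := by
    induction U using Multiset.induction_on with
    | empty => simp [Prod.zero_eq_mk]
    | cons x U ih => simp [ih, succ_nsmul']
  simp [splitOff, sum_map_prodMk]

theorem cmul_splitOff {e : K} (he : e ≠ 0) (ℓ : ℕ) (T A : Multiset H) :
    cmul ℓ (splitOff e T A) = cmul ℓ T + cmul ℓ A := by
  have hdisj : Disjoint (T.map fun x => (x, (0 : K))) (A.map fun x => (x, e)) := by
    simp [Multiset.disjoint_map_map, he.symm]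
  rw [splitOff, cmul_add_of_disjoint hdisj, cmul_map (Prod.mk_left_injective 0),
    cmul_map (Prod.mk_left_injective e)]

theorem isMinimalZeroSum_splitOff {e : K} {T A : Multiset H}
    (hT : IsMinimalZeroSum (A.sum ::ₘ T)) (hA0 : A ≠ 0) (hA : Multiset.card A = addOrderOf e) :
    IsMinimalZeroSum (splitOff e T A) := by
  obtain ⟨-, hsum, hmin⟩ := hT
  rw [Multiset.sum_cons] at hsum
  refine ⟨by simp [splitOff, hA0], ?_, fun U hU hU0 hUne hUsum => ?_⟩
  · rw [sum_splitOff, hA, addOrderOf_nsmul_eq_zero, add_comm, hsum, Prod.mk_zero_zero]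
  obtain ⟨T', hT', A', hA', rfl⟩ := exists_splitOff_eq_of_le_splitOff hU
  rw [sum_splitOff, Prod.mk_eq_zero] at hUsum
  obtain ⟨hsum', hcard⟩ := hUsum
  have hdvd : Multiset.card A ∣ Multiset.card A' := hA ▸ addOrderOf_dvd_of_nsmul_eq_zero hcard
  rcases eq_or_ne A' 0 with rfl | hA'0
  · refine hmin T' (hT'.trans (Multiset.le_cons_self _ _)) ?_ ?_ (by simpa using hsum')
    · rintro rfl
      exact hU0 rfl
    · rintro rfl
      simpa using Multiset.card_le_card hT'
  · obtain rfl : A' = A := Multiset.eq_of_le_of_card_le hA'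
      (Nat.le_of_dvd (Multiset.card_pos.2 hA'0) hdvd)
    refine hmin (A'.sum ::ₘ T') ((Multiset.cons_le_cons_iff _).2 hT') Multiset.cons_ne_zero ?_ ?_
    · intro h
      exact hUne (by rw [(Multiset.cons_inj_right _).1 h])
    · rw [Multiset.sum_cons, add_comm, hsum']

end SplitOff

theorem SDk_succ_add_addOrderOf_sub_one_le {H K : Type*} [AddCommGroup H] [Fintype H]
    [AddCommMonoid K] [Finite K] {e : K} (he : 1 < addOrderOf e)
    (heH : addOrderOf e < Fintype.card H) (k : ℕ) :
    SDk H (k + 1) + (addOrderOf e - 1) ≤ SDk (H × K) k := by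
  have : Nontrivial H := Fintype.one_lt_card_iff_nontrivial.1 (he.trans heH)
  have htwo : 2 ≤ SDk H (k + 1) := two_le_SDk_succ H k
  obtain ⟨S, hS, hcm, hcard⟩ := exists_card_eq_SDpair (Nat.lt_of_lt_of_le Nat.zero_lt_two htwo)
  obtain ⟨g, T, rfl, hcmT⟩ := exists_eq_cons_cmul_one_le hS.1 hcm
  have hg0 : g ≠ 0 := hS.ne_zero_of_mem (hcard ▸ htwo) (Multiset.mem_cons_self g T)
  obtain ⟨A, hA, hAsum⟩ := exists_finset_card_eq_sum_eq hg0 (Nat.zero_lt_of_lt he) heH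
  have he0 : e ≠ 0 := by
    rintro rfl
    simp at he
  have hmin : IsMinimalZeroSum (splitOff e T A.val) := by
    have hA0 : A.Nonempty := Finset.card_pos.1 (hA ▸ Nat.zero_lt_of_lt he)
    refine isMinimalZeroSum_splitOff ?_ (Finset.val_eq_zero.not.2 hA0.ne_empty) hA
    rwa [Finset.sum_val, show A.sum id = g from hAsum]
  have hcm_splitOff : cmul 1 (splitOff e T A.val) ≤ k := by
    rwa [cmul_splitOff he0, cmul_one_eq_zero_of_nodup A.nodup, add_zero]
  calc SDk H (k + 1) + (addOrderOf e - 1) = Multiset.card (splitOff e T A.val) := by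
        rw [SDk, ← hcard, card_splitOff, Multiset.card_cons, Finset.card_val, hA]
        omega
    _ ≤ SDk (H × K) k := card_le_SDpair hmin hcm_splitOff

theorem SDk_succ_add_sub_one_le_prod_zmod (H : Type*) [AddCommGroup H] [Fintype H] {n : ℕ}
    (hn : 1 < n) (hnH : n < Fintype.card H) (k : ℕ) :
    SDk H (k + 1) + (n - 1) ≤ SDk (H × ZMod n) k := by
  have : NeZero n := ⟨by omega⟩
  simpa using SDk_succ_add_addOrderOf_sub_one_le (e := (1 : ZMod n)) (by simpa using hn)
    (by simpa using hnH) k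

theorem SDk_prod_prod_pi_le {H : Type*} [AddCommMonoid H] [Finite H] {r : ℕ}
    (n : Fin (r + 1) → ℕ) [∀ i, NeZero (n i)] (k : ℕ) :
    SDk ((H × ZMod (n 0)) × ∀ i : Fin r, ZMod (n i.succ)) k ≤ SDk (H × ∀ i, ZMod (n i)) k := by
  let φ : (H × ZMod (n 0)) × (∀ i : Fin r, ZMod (n i.succ)) ≃+ H × ∀ i, ZMod (n i) :=
    AddEquiv.prodAssoc.trans ((AddEquiv.refl H).prodCongr
      (Fin.consLinearEquiv ℤ fun i => ZMod (n i)).toAddEquiv)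
  exact SDpair_le_of_injective φ.toAddMonoidHom φ.injective k 1

theorem SDk_split_off_large_general (H : Type*) [AddCommGroup H] [Fintype H]
    (r : ℕ) (n : Fin r → ℕ) (hn1 : ∀ i, 1 < n i)
    (hs : ∀ s : Fin r, n s < Fintype.card H * ∏ i ∈ Finset.Iio s, n i) (k : ℕ) :
    SDk H (k + r) + ∑ i, (n i - 1) ≤ SDk (H × ∀ i : Fin r, ZMod (n i)) k := by
  induction r generalizing H with
  | zero =>
    simpa [SDk] using SDpair_le_of_injective (AddMonoidHom.inl H (∀ i : Fin 0, ZMod (n i)))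
      (Prod.mk_left_injective 0) k 1
  | succ r ih =>
    have (i : Fin (r + 1)) : NeZero (n i) := ⟨Nat.ne_zero_of_lt (hn1 i)⟩
    have hn0 : n 0 < Fintype.card H := by simpa [← _root_.bot_eq_zero] using hs 0
    have hs_tail (s : Fin r) : n s.succ <
        Fintype.card (H × ZMod (n 0)) * ∏ i ∈ Finset.Iio s, n i.succ := by
      rw [Fintype.card_prod, ZMod.card, mul_assoc, ← prod_Iio_succ_eq_mul]
      exact hs s.succ
    calc SDk H (k + (r + 1)) + ∑ i, (n i - 1)
        = SDk H (k + r + 1) + (n 0 - 1) + ∑ i : Fin r, (n i.succ - 1) := by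
          rw [Fin.sum_univ_succ, add_assoc, add_assoc k]
      _ ≤ SDk (H × ZMod (n 0)) (k + r) + ∑ i : Fin r, (n i.succ - 1) := by
          gcongr
          exact SDk_succ_add_sub_one_le_prod_zmod H (hn1 0) hn0 (k + r)
      _ ≤ SDk ((H × ZMod (n 0)) × ∀ i : Fin r, ZMod (n i.succ)) k :=
          ih (H × ZMod (n 0)) (fun i => n i.succ) (fun i => hn1 i.succ) hs_tail
      _ ≤ SDk (H × ∀ i, ZMod (n i)) k := SDk_prod_prod_pi_le n k

/-- Proposition: for a finite abelian group `H`, integers `1 < n_1 ≤ … ≤ n_r`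
with `n_s < |H| · Π_{i<s} n_i` for each `s`, `G = H ⊕ C_{n_1} ⊕ … ⊕ C_{n_r}`
and `k ≥ 1`: `SD_k(G) ≥ SD_{k+r}(H) + Σ_{i=1}^{r} (n_i − 1)`. -/
theorem SDk_split_off_large (H : Type*) [AddCommGroup H] [Fintype H]
    (r : ℕ) (n : Fin r → ℕ) (hn1 : ∀ i, 1 < n i)
    (hmono : ∀ i j : Fin r, i ≤ j → n i ≤ n j)
    (hs : ∀ s : Fin r, n s < Fintype.card H * ∏ i ∈ Finset.Iio s, n i)
    (k : ℕ) (hk : 1 ≤ k) :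
    SDk H (k + r) + ∑ i, (n i - 1) ≤ SDk (H × ∀ i : Fin r, ZMod (n i)) k :=
  SDk_split_off_large_general H r n hn1 hs k
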